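/- Let y be a quasi shell solution. Then y(r) = y(0), γ(r) < 0 for 0 < r < R₀, γ(R₀) = 0, and ϱ(r) = p(r) = 0 and m(r) = 0 for all r ∈ (0, R₀]; that is, the region r ≤ R₀ = √L₀ e^{−y(0)} is an inner vacuum region. -/

import Mathlib

open MeasureTheory Real Set Filter

/-- The constant `c_ℓ = 2π ∫₀¹ s^ℓ (1-s)^{-1/2} ds`. -/
noncomputable def cConst (ℓ : ℝ) : ℝ :=
  2 * π * ∫ s in Set.Ioc (0 : ℝ) 1, s ^ ℓ / Real.sqrt (1 - s)

/-- Energy density of the massless Einstein--Vlasov ansatz. -/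
noncomputable def rho (k ℓ L0 : ℝ) (y : ℝ → ℝ) (r : ℝ) : ℝ :=
  cConst ℓ * r ^ (2 * ℓ) *
    ∫ ε in Set.Ioc (Real.sqrt L0 / r) (Real.exp (y r)),
      (1 - ε * Real.exp (-(y r))) ^ k * ε ^ 2 * (ε ^ 2 - L0 / r ^ 2) ^ (ℓ + 1 / 2)

/-- Radial pressure of the massless Einstein--Vlasov ansatz. -/
noncomputable def pres (k ℓ L0 : ℝ) (y : ℝ → ℝ) (r : ℝ) : ℝ :=
  (cConst ℓ / (2 * ℓ + 3)) * r ^ (2 * ℓ) *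
    ∫ ε in Set.Ioc (Real.sqrt L0 / r) (Real.exp (y r)),
      (1 - ε * Real.exp (-(y r))) ^ k * (ε ^ 2 - L0 / r ^ 2) ^ (ℓ + 3 / 2)

/-- The Hawking mass `m(r) = 4π ∫₀ʳ s² ϱ(s) ds`. -/
noncomputable def hawkingMass (k ℓ L0 : ℝ) (y : ℝ → ℝ) (r : ℝ) : ℝ :=
  4 * π * ∫ s in Set.Ioc (0 : ℝ) r, s ^ 2 * rho k ℓ L0 y s

/-- The characteristic function `γ(r) = y(r) - (1/2) ln (L₀ / r²)`. -/
noncomputable def charFn (L0 : ℝ) (y : ℝ → ℝ) (r : ℝ) : ℝ :=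
  y r - (1 / 2) * Real.log (L0 / r ^ 2)

/-- The inner radius `R₀ = √L₀ e^{-y(0)}`. -/
noncomputable def innerRadius (L0 : ℝ) (y : ℝ → ℝ) : ℝ :=
  Real.sqrt L0 * Real.exp (-(y 0))

/-- A quasi shell solution of the massless Einstein--Vlasov system. -/
def QuasiShell (k ℓ L0 : ℝ) (y : ℝ → ℝ) : Prop :=
  ContDiffOn ℝ 1 y (Set.Ici 0) ∧
  ∀ r > 0, 2 * hawkingMass k ℓ L0 y r / r < 1 ∧
    HasDerivAt y
      (-(1 - 2 * hawkingMass k ℓ L0 y r / r)⁻¹ *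
        (4 * π * r * pres k ℓ L0 y r + hawkingMass k ℓ L0 y r / r ^ 2)) r

theorem cConst_nonneg (ℓ : ℝ) : 0 ≤ cConst ℓ := by
  unfold cConst
  refine mul_nonneg (by positivity) (setIntegral_nonneg measurableSet_Ioc fun s hs => ?_)
  exact div_nonneg (Real.rpow_nonneg hs.1.le _) (Real.sqrt_nonneg _)

theorem factors_nonneg {L0 : ℝ} (hL : 0 < L0) (y : ℝ → ℝ) {r : ℝ} (hr : 0 < r) {ε : ℝ}
    (h : ε ∈ Set.Ioc (Real.sqrt L0 / r) (Real.exp (y r))) :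
    0 ≤ 1 - ε * Real.exp (-(y r)) ∧ 0 ≤ ε ^ 2 - L0 / r ^ 2 := by
  constructor
  · have h1 : ε * Real.exp (-(y r)) ≤ Real.exp (y r) * Real.exp (-(y r)) :=
      mul_le_mul_of_nonneg_right h.2 (Real.exp_pos _).le
    rw [← Real.exp_add] at h1
    simp only [add_neg_cancel, Real.exp_zero] at h1
    linarith
  · have h0 : 0 ≤ Real.sqrt L0 / r := by positivity
    have h1 : (Real.sqrt L0 / r) ^ 2 ≤ ε ^ 2 := pow_le_pow_left₀ h0 h.1.le 2
    rw [div_pow, Real.sq_sqrt hL.le] at h1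
    linarith

theorem rho_nonneg (k ℓ : ℝ) {L0 : ℝ} (hL : 0 < L0) (y : ℝ → ℝ) {r : ℝ} (hr : 0 < r) :
    0 ≤ rho k ℓ L0 y r := by
  unfold rho
  refine mul_nonneg (mul_nonneg (cConst_nonneg ℓ) (Real.rpow_nonneg hr.le _))
    (setIntegral_nonneg measurableSet_Ioc fun ε hε => ?_)
  obtain ⟨h1, h2⟩ := factors_nonneg hL y hr hε
  exact mul_nonneg (mul_nonneg (Real.rpow_nonneg h1 _) (sq_nonneg _)) (Real.rpow_nonneg h2 _)

theorem pres_nonneg (k : ℝ) {ℓ : ℝ} (hl : -(1 / 2) ≤ ℓ) {L0 : ℝ} (hL : 0 < L0) (y : ℝ → ℝ)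
    {r : ℝ} (hr : 0 < r) : 0 ≤ pres k ℓ L0 y r := by
  unfold pres
  refine mul_nonneg (mul_nonneg (div_nonneg (cConst_nonneg ℓ) (by linarith))
    (Real.rpow_nonneg hr.le _)) (setIntegral_nonneg measurableSet_Ioc fun ε hε => ?_)
  obtain ⟨h1, h2⟩ := factors_nonneg hL y hr hε
  exact mul_nonneg (Real.rpow_nonneg h1 _) (Real.rpow_nonneg h2 _)

theorem hawkingMass_nonneg (k ℓ : ℝ) {L0 : ℝ} (hL : 0 < L0) (y : ℝ → ℝ) (r : ℝ) :
    0 ≤ hawkingMass k ℓ L0 y r := by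
  unfold hawkingMass
  refine mul_nonneg (by positivity) (setIntegral_nonneg measurableSet_Ioc fun s hs => ?_)
  exact mul_nonneg (sq_nonneg _) (rho_nonneg k ℓ hL y hs.1)

theorem log_aux {L0 : ℝ} (hL : 0 < L0) {r : ℝ} (hr : 0 < r) :
    (1 / 2) * Real.log (L0 / r ^ 2) = Real.log (Real.sqrt L0) - Real.log r := by
  rw [Real.log_div hL.ne' (by positivity), Real.log_pow, Real.log_sqrt hL.le]
  push_cast
  ring

/-- The region `r ≤ R₀ = √L₀ e^{-y(0)}` is an inner vacuum region:
`y ≡ y(0)`, `γ < 0` on `(0,R₀)`, `γ(R₀) = 0`, and `ϱ = p = m = 0` on `(0,R₀]`. -/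
theorem inner_vacuum_region (k ℓ L0 : ℝ) (hk : 0 ≤ k) (hl : -(1 / 2) ≤ ℓ) (hL : 0 < L0)
    (y : ℝ → ℝ) (hy : QuasiShell k ℓ L0 y) :
    (∀ r, 0 ≤ r → r ≤ innerRadius L0 y → y r = y 0) ∧
    (∀ r, 0 < r → r < innerRadius L0 y → charFn L0 y r < 0) ∧
    charFn L0 y (innerRadius L0 y) = 0 ∧
    ∀ r, 0 < r → r ≤ innerRadius L0 y →
      rho k ℓ L0 y r = 0 ∧ pres k ℓ L0 y r = 0 ∧ hawkingMass k ℓ L0 y r = 0 := by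
  obtain ⟨hC, hD⟩ := hy
  have hs : 0 < Real.sqrt L0 := Real.sqrt_pos.mpr hL
  have hcont : ContinuousOn y (Set.Ici 0) := hC.continuousOn
  have hanti : AntitoneOn y (Set.Ici 0) := by
    refine antitoneOn_of_deriv_nonpos (convex_Ici 0) hcont ?_ ?_
    · intro x hx
      rw [interior_Ici] at hx
      exact (hD x hx).2.differentiableAt.differentiableWithinAt
    · intro x hx
      rw [interior_Ici] at hx
      have hx0 : 0 < x := hx
      obtain ⟨h1, h2⟩ := hD x hx
      rw [h2.deriv]
      have h3 := pres_nonneg k hl hL y hx0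
      have h4 := hawkingMass_nonneg k ℓ hL y x
      have h5 : 0 ≤ (1 - 2 * hawkingMass k ℓ L0 y x / x)⁻¹ := inv_nonneg.mpr (by linarith)
      have h6 : 0 ≤ 4 * π * x * pres k ℓ L0 y x + hawkingMass k ℓ L0 y x / x ^ 2 := by
        positivity
      rw [neg_mul]
      exact neg_nonpos.mpr (mul_nonneg h5 h6)
  have hRpos : 0 < innerRadius L0 y := mul_pos hs (Real.exp_pos _)
  have hempty : ∀ r, 0 < r → r ≤ innerRadius L0 y →
      Set.Ioc (Real.sqrt L0 / r) (Real.exp (y r)) = ∅ := by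
    intro r hr hrR
    apply Set.Ioc_eq_empty
    rw [not_lt]
    have h1 : y r ≤ y 0 := hanti (Set.mem_Ici.mpr le_rfl) (Set.mem_Ici.mpr hr.le) hr.le
    rw [le_div_iff₀ hr]
    calc Real.exp (y r) * r ≤ Real.exp (y 0) * innerRadius L0 y :=
          mul_le_mul (Real.exp_le_exp.mpr h1) hrR hr.le (Real.exp_pos _).le
      _ = Real.sqrt L0 * (Real.exp (y 0) * Real.exp (-(y 0))) := by
          unfold innerRadius; ring
      _ = Real.sqrt L0 := by rw [← Real.exp_add]; simp
  have hrho : ∀ r, 0 < r → r ≤ innerRadius L0 y → rho k ℓ L0 y r = 0 := by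
    intro r hr hrR
    simp [rho, hempty r hr hrR]
  have hpres : ∀ r, 0 < r → r ≤ innerRadius L0 y → pres k ℓ L0 y r = 0 := by
    intro r hr hrR
    simp [pres, hempty r hr hrR]
  have hmass : ∀ r, 0 < r → r ≤ innerRadius L0 y → hawkingMass k ℓ L0 y r = 0 := by
    intro r hr hrR
    unfold hawkingMass
    rw [setIntegral_eq_zero_of_forall_eq_zero, mul_zero]
    intro s hs
    rw [hrho s hs.1 (hs.2.trans hrR), mul_zero]
  have hconst : ∀ r, 0 ≤ r → r ≤ innerRadius L0 y → y r = y 0 := by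
    have hmono : MonotoneOn y (Set.Icc 0 (innerRadius L0 y)) := by
      refine monotoneOn_of_deriv_nonneg (convex_Icc _ _)
        (hcont.mono Set.Icc_subset_Ici_self) ?_ ?_
      · intro x hx
        rw [interior_Icc] at hx
        exact (hD x hx.1).2.differentiableAt.differentiableWithinAt
      · intro x hx
        rw [interior_Icc] at hx
        rw [(hD x hx.1).2.deriv, hpres x hx.1 hx.2.le, hmass x hx.1 hx.2.le]
        simp
    intro r hr hrR
    exact le_antisymm (hanti (Set.mem_Ici.mpr le_rfl) (Set.mem_Ici.mpr hr) hr)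
      (hmono ⟨le_rfl, hRpos.le⟩ ⟨hr, hrR⟩ hr)
  have hlogR : Real.log (innerRadius L0 y) = Real.log (Real.sqrt L0) - y 0 := by
    unfold innerRadius
    rw [Real.log_mul hs.ne' (Real.exp_pos _).ne', Real.log_exp]
    ring
  refine ⟨hconst, ?_, ?_, fun r hr hrR => ⟨hrho r hr hrR, hpres r hr hrR, hmass r hr hrR⟩⟩
  · intro r hr hrR
    unfold charFn
    rw [log_aux hL hr, hconst r hr.le hrR.le]
    have := Real.log_lt_log hr hrR
    linarith
  · unfold charFn
    rw [log_aux hL hRpos, hconst _ hRpos.le le_rfl, hlogR]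
    ring
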